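/- Let α, β > −1 and let n ≥ 2 be an integer. Then for each integer k with 0 ≤ k and k + 2 ≤ n, the coefficients d_{k,n} satisfy the three-term recurrence d_{k,n} = [2(α−β)(k+1) / (n(n+α+β+1) − k² − (α+β+1)k)] · d_{k+1,n} + [(n(n+α+β+1) − (k+2)² + (α+β+1)(k+2)) / (n(n+α+β+1) − k² − (α+β+1)k)] · d_{k+2,n}, with initial values d_{n,n} = Γ(2n+α+β+1)/(2^{2n} Γ(n+α+β+1) n!) and d_{n−1,n} = (α−β) Γ(2n+α+β)/(2^{2n−1} Γ(n+α+β+1) (n−1)!). -/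

import Mathlib

open Finset

/-- Pochhammer symbol `(a)_j = a (a+1) ⋯ (a+j-1)`. -/
noncomputable def poch (a : ℝ) (j : ℕ) : ℝ := ∏ i ∈ Finset.range j, (a + i)

/-- Generalized binomial coefficient `binom(a, m) = a (a-1) ⋯ (a-m+1) / m!`. -/
noncomputable def gbinom (a : ℝ) (m : ℕ) : ℝ :=
  (∏ i ∈ Finset.range m, (a - i)) / (Nat.factorial m)

/-- Jacobi polynomial `P_n^{(α,β)}(x)` of a real variable. -/
noncomputable def jacobiP (α β : ℝ) (n : ℕ) (x : ℝ) : ℝ :=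
  (1 / 2 ^ n) * ∑ k ∈ Finset.range (n + 1),
    gbinom ((n : ℝ) + α) (n - k) * gbinom ((n : ℝ) + β) k * (x - 1) ^ k * (x + 1) ^ (n - k)

/-- Jacobi polynomial `P_n^{(α,β)}(z)` of a complex variable. -/
noncomputable def jacobiC (α β : ℝ) (n : ℕ) (z : ℂ) : ℂ :=
  (1 / 2 ^ n) * ∑ k ∈ Finset.range (n + 1),
    ((gbinom ((n : ℝ) + α) (n - k) * gbinom ((n : ℝ) + β) k : ℝ) : ℂ) *
      (z - 1) ^ k * (z + 1) ^ (n - k)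

/-- Chebyshev-connection coefficients `d_{k,n}`, given by a terminating ₃F₂ sum. -/
noncomputable def dCoeff (α β : ℝ) (n k : ℕ) : ℝ :=
  (poch ((n : ℝ) + α + β + 1) k * poch ((k : ℝ) + α + 1) (n - k)) /
      ((Nat.factorial (n - k)) * 2 ^ (2 * k) * (Nat.factorial k)) *
    ∑ j ∈ Finset.range (n - k + 1),
      (poch ((k : ℝ) - n) j * poch ((n : ℝ) + k + α + β + 1) j * poch ((k : ℝ) + 1 / 2) j) /
        (poch ((k : ℝ) + α + 1) j * poch (2 * (k : ℝ) + 1) j * (Nat.factorial j))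

/-- The Bernstein ellipse `E_ρ`: the set of points `z = (u + u⁻¹)/2` with `|u| = ρ`. -/
def bernsteinEllipse (ρ : ℝ) : Set ℂ :=
  {z : ℂ | ∃ u : ℂ, ‖u‖ = ρ ∧ z = (u + u⁻¹) / 2}

/-!
Write `x = (u + u⁻¹) / 2`, so that `(x - 1) / 2 = (u - 2 + u⁻¹) / 4`, and `λ = α + β + 1`.
Expanding `P_n^{(α,β)}(x)` first in powers of `(x - 1) / 2` and then in powers of `u` identifies
`d_{k,n}` with the coefficient of `u ^ k`. In terms of `θ = u d/du`, the Jacobi differential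
equation multiplied by `u - u⁻¹` becomes
`(u - u⁻¹) (n (n + λ) - θ²) P + (2 (β - α) - λ (u + u⁻¹)) θ P = 0`,
and the coefficient of `u ^ (k + 1)` on the left is the three-term recurrence. On the power
`((x - 1) / 2) ^ m` the Jacobi operator gives
`(n - m) (n + m + λ) ((x - 1) / 2) ^ m - m (m + α) ((x - 1) / 2) ^ (m - 1)`,
so that summing against the Taylor coefficients of `P_n^{(α,β)}` at `1` telescopes to zero.
-/

section Pochhammer

lemma poch_eq_ascPochhammer_eval (a : ℝ) (j : ℕ) : poch a j = (ascPochhammer ℝ j).eval a := by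
  induction j with
  | zero => simp [poch]
  | succ j ih => rw [ascPochhammer_succ_eval, ← ih, poch, prod_range_succ, poch]

@[simp]
lemma poch_zero (a : ℝ) : poch a 0 = 1 := prod_range_zero _

@[simp]
lemma poch_one (a : ℝ) : poch a 1 = a := by simp [poch]

lemma poch_succ (a : ℝ) (j : ℕ) : poch a (j + 1) = poch a j * (a + j) := prod_range_succ _ _

lemma poch_add (a : ℝ) (i j : ℕ) : poch a (i + j) = poch a i * poch (a + i) j := by
  simp only [poch, prod_range_add, Nat.cast_add, add_assoc]

lemma ne_neg_natCast_of_pos {a : ℝ} (ha : 0 < a) (i : ℕ) : a ≠ -i :=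
  ((neg_nonpos.2 i.cast_nonneg).trans_lt ha).ne'

lemma poch_ne_zero {a : ℝ} (ha : ∀ i : ℕ, a ≠ -i) (j : ℕ) : poch a j ≠ 0 :=
  prod_ne_zero_iff.2 fun i _ h ↦ ha i (eq_neg_of_add_eq_zero_left h)

lemma poch_two_mul (a : ℝ) (j : ℕ) :
    poch (2 * a) (2 * j) = 4 ^ j * poch a j * poch (a + 1 / 2) j := by
  induction j with
  | zero => simp
  | succ j ih =>
    rw [show 2 * (j + 1) = 2 * j + 1 + 1 by ring, poch_succ, poch_succ, ih, poch_succ, poch_succ]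
    push_cast
    ring

lemma factorial_mul_poch (q j : ℕ) : (q.factorial : ℝ) * poch (q + 1) j = (q + j).factorial := by
  rw [poch_eq_ascPochhammer_eval, factorial_mul_ascPochhammer]

lemma factorial_mul_poch_neg (r j : ℕ) :
    (r.factorial : ℝ) * poch (-(r + j : ℕ)) j = (-1) ^ j * (r + j).factorial := by
  rw [poch_eq_ascPochhammer_eval, ascPochhammer_eval_neg_eq_descPochhammer,
    descPochhammer_eval_eq_descFactorial, ← Nat.factorial_mul_descFactorial (Nat.le_add_left j r),
    Nat.add_sub_cancel]
  push_cast
  ring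

lemma Gamma_add_natCast_eq_poch_mul {a : ℝ} (ha : ∀ i : ℕ, a ≠ -i) (j : ℕ) :
    Real.Gamma (a + j) = poch a j * Real.Gamma a := by
  induction j with
  | zero => simp
  | succ j ih =>
    have haj : a + j ≠ 0 := fun h ↦ ha j (eq_neg_of_add_eq_zero_left h)
    rw [Nat.cast_succ, ← add_assoc, Real.Gamma_add_one haj, ih, poch_succ]
    ring

end Pochhammer

section Choose

variable {R : Type*} [CommRing R]

lemma cast_sub_mul_cast_choose (n k : ℕ) :
    ((n : R) - k) * n.choose k = (k + 1) * n.choose (k + 1) := by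
  rcases le_or_gt k n with hkn | hnk
  · have h := congrArg (Nat.cast : ℕ → R) (Nat.choose_succ_right_eq n k)
    push_cast [hkn] at h
    linear_combination -h
  · simp [Nat.choose_eq_zero_of_lt hnk, Nat.choose_eq_zero_of_lt (hnk.trans k.lt_succ_self)]

lemma cast_succ_mul_choose_two_mul_succ (m k : ℕ) :
    ((k : R) + 1) * (2 * (m + 1)).choose (m + k + 2) =
      (m + 1) * ((2 * m).choose (m + k) - (2 * m).choose (m + k + 2)) := by
  have hpascal : (2 * (m + 1)).choose (m + k + 2) = (2 * m).choose (m + k) +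
      2 * (2 * m).choose (m + k + 1) + (2 * m).choose (m + k + 2) := by
    rw [show 2 * (m + 1) = 2 * m + 1 + 1 by ring, Nat.choose_succ_succ', Nat.choose_succ_succ',
      Nat.choose_succ_succ']
    ring
  have h₀ := cast_sub_mul_cast_choose (R := R) (2 * m) (m + k)
  have h₁ := cast_sub_mul_cast_choose (R := R) (2 * m) (m + k + 1)
  push_cast [hpascal] at h₀ h₁ ⊢
  linear_combination -h₀ - h₁

end Choose

section LaurentCoefficients

/-- The coefficient of `u ^ k` in `((x - 1) / 2) ^ m = ((u - 2 + u⁻¹) / 4) ^ m`, where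
`x = (u + u⁻¹) / 2`. Only `k ≥ 0` is recorded, the expansion being symmetric under `u ↦ u⁻¹`. -/
noncomputable def laurentCoeff (m k : ℕ) : ℝ :=
  (-1) ^ (m + k) * (2 * m).choose (m + k) / 4 ^ m

lemma laurentCoeff_eq_zero_of_lt {m k : ℕ} (h : m < k) : laurentCoeff m k = 0 := by
  simp [laurentCoeff, Nat.choose_eq_zero_of_lt (show 2 * m < m + k by omega)]

lemma laurentCoeff_succ_right (m k : ℕ) :
    ((m : ℝ) + k + 1) * laurentCoeff m (k + 1) = -(m - k) * laurentCoeff m k := by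
  have h := cast_sub_mul_cast_choose (R := ℝ) (2 * m) (m + k)
  push_cast at h
  simp only [laurentCoeff, ← add_assoc, pow_succ]
  linear_combination (-1) ^ (m + k) / 4 ^ m * h

/- The coefficient of `u ^ (k + 1)` in `θ (y ^ (m + 1)) = (m + 1) y ^ m (u - u⁻¹) / 4`, where
`y = (x - 1) / 2`. -/
lemma laurentCoeff_succ_succ (m k : ℕ) :
    4 * ((k : ℝ) + 1) * laurentCoeff (m + 1) (k + 1) =
      (m + 1) * (laurentCoeff m k - laurentCoeff m (k + 2)) := by
  have h := cast_succ_mul_choose_two_mul_succ (R := ℝ) m k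
  rw [laurentCoeff, show m + 1 + (k + 1) = m + k + 2 by ring]
  simp only [laurentCoeff, ← add_assoc, pow_succ]
  linear_combination (-1) ^ (m + k) / 4 ^ m * h

lemma laurentCoeff_add_self (k j : ℕ) :
    laurentCoeff (k + j) k = (-1) ^ j * (k + j).factorial * poch (k + 1 / 2) j /
      (4 ^ k * k.factorial * j.factorial * poch (2 * k + 1) j) := by
  have hchoose : ((2 * (k + j)).choose (k + j + k) : ℝ) =
      (2 * k + 2 * j).factorial / ((2 * k + j).factorial * j.factorial) := by
    rw [show 2 * (k + j) = 2 * k + j + j by ring, show k + j + k = 2 * k + j by ring,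
      Nat.cast_add_choose, show 2 * k + 2 * j = 2 * k + j + j by ring]
  have hnum : ((2 * k + 2 * j).factorial : ℝ) =
      (2 * k).factorial * (4 ^ j * poch (k + 1 / 2) j * poch (k + 1) j) := by
    rw [← factorial_mul_poch]
    push_cast
    rw [show 2 * (k : ℝ) + 1 = 2 * (k + 1 / 2) by ring, poch_two_mul, add_assoc (k : ℝ), add_halves]
  have hden : ((2 * k + j).factorial : ℝ) = (2 * k).factorial * poch (2 * k + 1) j := by
    simp [← factorial_mul_poch]
  have hsign : (-1 : ℝ) ^ (k + j + k) = (-1) ^ j := by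
    rw [show k + j + k = j + 2 * k by ring, pow_add, pow_mul]; simp
  rw [laurentCoeff, hchoose, hnum, hden, ← factorial_mul_poch, hsign, pow_add]
  field_simp

end LaurentCoefficients

section JacobiOperator

/-- The functional sending the coefficients `v` of `P = ∑ v_k u ^ k` to the coefficient of
`u ^ (k + 1)` in `(u - u⁻¹) (ν (ν + λ) - θ²) P + (2 (β - α) - λ (u + u⁻¹)) θ P`, where
`θ = u d/du` and `λ = α + β + 1`: the Jacobi differential operator of degree `ν`, multiplied by
`u - u⁻¹`. -/
noncomputable def jacobiOp (α β ν : ℝ) (k : ℕ) : (ℕ → ℝ) →ₗ[ℝ] ℝ :=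
  (ν * (ν + α + β + 1) - (k : ℝ) ^ 2 - (α + β + 1) * k) • LinearMap.proj k -
    (2 * (α - β) * ((k : ℝ) + 1)) • LinearMap.proj (k + 1) -
    (ν * (ν + α + β + 1) - ((k : ℝ) + 2) ^ 2 + (α + β + 1) * ((k : ℝ) + 2)) •
      LinearMap.proj (k + 2)

lemma jacobiOp_apply (α β ν : ℝ) (k : ℕ) (v : ℕ → ℝ) :
    jacobiOp α β ν k v =
      (ν * (ν + α + β + 1) - (k : ℝ) ^ 2 - (α + β + 1) * k) * v k -
        2 * (α - β) * ((k : ℝ) + 1) * v (k + 1) -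
        (ν * (ν + α + β + 1) - ((k : ℝ) + 2) ^ 2 + (α + β + 1) * ((k : ℝ) + 2)) * v (k + 2) :=
  rfl

lemma jacobiOp_laurentCoeff (α β ν : ℝ) (k m : ℕ) :
    jacobiOp α β ν k (laurentCoeff m) =
      (ν - m) * (ν + m + α + β + 1) * (laurentCoeff m k - laurentCoeff m (k + 2)) -
        4 * (m + α) * (k + 1) * laurentCoeff m (k + 1) := by
  have h₀ := laurentCoeff_succ_right m k
  have h₁ := laurentCoeff_succ_right m (k + 1)
  push_cast at h₁
  rw [jacobiOp_apply]
  linear_combination (m + k + α + β + 1) * h₀ - (m - k - 2 + α + β + 1) * h₁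

end JacobiOperator

section TaylorCoefficients

/-- The coefficient of `((x - 1) / 2) ^ m` in the Jacobi polynomial `P_n^{(α,β)}(x)`. The formula is
meaningful for `m ≤ n` only, because of the truncated subtraction `n - m`. -/
noncomputable def jacobiTaylorCoeff (α β : ℝ) (n m : ℕ) : ℝ :=
  poch (n + α + β + 1) m * poch (m + α + 1) (n - m) / (m.factorial * (n - m).factorial)

lemma jacobiTaylorCoeff_succ (α β : ℝ) {n m : ℕ} (h : m < n) :
    ((m : ℝ) + 1) * (m + 1 + α) * jacobiTaylorCoeff α β n (m + 1) =
      (n - m) * (n + m + α + β + 1) * jacobiTaylorCoeff α β n m := by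
  obtain ⟨q, rfl⟩ := Nat.exists_eq_add_of_le' h
  have hpoch : poch ((m : ℝ) + α + 1) (q + 1) = (m + α + 1) * poch (m + 1 + α + 1) q := by
    rw [add_comm q, poch_add, poch_one, Nat.cast_one, add_right_comm (m : ℝ) α 1]
  rw [jacobiTaylorCoeff, jacobiTaylorCoeff, Nat.add_sub_cancel,
    show q + (m + 1) - m = q + 1 by omega, poch_succ, Nat.factorial_succ, Nat.factorial_succ]
  push_cast
  rw [hpoch]
  field_simp
  ring

/- By `laurentCoeff_succ_succ`, the right side is the coefficient of `u ^ (k + 1)` in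
`(u - u⁻¹) c_M M (M + α) ((x - 1) / 2) ^ (M - 1)`, where `c_M` is the Taylor coefficient. -/
lemma sum_range_jacobiTaylorCoeff_mul_jacobiOp (α β : ℝ) {n M : ℕ} (k : ℕ) (hM : M ≤ n) :
    ∑ m ∈ range M, jacobiTaylorCoeff α β n m * jacobiOp α β n k (laurentCoeff m) =
      4 * jacobiTaylorCoeff α β n M * (M + α) * (k + 1) * laurentCoeff M (k + 1) := by
  induction M with
  | zero => simp [laurentCoeff_eq_zero_of_lt]
  | succ M ih =>
    have htaylor := jacobiTaylorCoeff_succ α β hM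
    have hlaurent := laurentCoeff_succ_succ M k
    rw [sum_range_succ, ih (by omega), jacobiOp_laurentCoeff]
    apply mul_left_cancel₀ (M.cast_add_one_ne_zero : (M : ℝ) + 1 ≠ 0)
    push_cast
    linear_combination
      -(((n : ℝ) - M) * (n + M + α + β + 1) * jacobiTaylorCoeff α β n M) * hlaurent -
        4 * ((k : ℝ) + 1) * laurentCoeff (M + 1) (k + 1) * htaylor

lemma jacobiOp_sum_jacobiTaylorCoeff_smul (α β : ℝ) (n k : ℕ) :
    jacobiOp α β n k (∑ m ∈ range (n + 1), jacobiTaylorCoeff α β n m • laurentCoeff m) = 0 := by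
  simp only [map_sum, map_smul, smul_eq_mul]
  rw [sum_range_succ, sum_range_jacobiTaylorCoeff_mul_jacobiOp α β k le_rfl, jacobiOp_laurentCoeff]
  ring

lemma jacobiTaylorCoeff_add {α : ℝ} (hα : ∀ i : ℕ, α + 1 ≠ -i) (β : ℝ) {n k j : ℕ}
    (h : k + j ≤ n) :
    jacobiTaylorCoeff α β n (k + j) =
      poch (n + α + β + 1) k * poch (k + α + 1) (n - k) / ((k + j).factorial * (n - k).factorial) *
        ((-1) ^ j * poch (k - n) j * poch (n + k + α + β + 1) j / poch (k + α + 1) j) := by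
  obtain ⟨r, rfl⟩ := Nat.exists_eq_add_of_le' h
  have hsub : (k : ℝ) - (r + (k + j) : ℕ) = -(r + j : ℕ) := by push_cast; ring
  have hneg : (-1) ^ j * poch (-(r + j : ℕ) : ℝ) j = (r + j).factorial / r.factorial := by
    rw [eq_div_iff (by positivity), mul_assoc, mul_comm (poch _ _), factorial_mul_poch_neg,
      ← mul_assoc, ← mul_pow, neg_one_mul, neg_neg, one_pow, one_mul]
  have hpoch : poch ((k : ℝ) + α + 1) j ≠ 0 :=
    poch_ne_zero (fun i hi ↦ hα (k + i) (by push_cast; linarith)) j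
  rw [jacobiTaylorCoeff, Nat.add_sub_cancel, show r + (k + j) - k = r + j by omega, hsub, hneg,
    poch_add _ k j, add_comm r j, poch_add _ j r,
    show ((k + j : ℕ) : ℝ) + α + 1 = k + α + 1 + j by push_cast; ring,
    show ((r + (k + j) : ℕ) : ℝ) + α + β + 1 + k = (r + (k + j) : ℕ) + k + α + β + 1 by ring]
  field_simp

end TaylorCoefficients

section ConnectionCoefficients

lemma dCoeff_eq_sum {α : ℝ} (hα : ∀ i : ℕ, α + 1 ≠ -i) (β : ℝ) {n k : ℕ} (hk : k ≤ n) :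
    dCoeff α β n k =
      (∑ m ∈ range (n + 1), jacobiTaylorCoeff α β n m • laurentCoeff m) k := by
  have hlow : ∑ m ∈ range k, jacobiTaylorCoeff α β n m * laurentCoeff m k = 0 :=
    sum_eq_zero fun m hm ↦ by rw [laurentCoeff_eq_zero_of_lt (mem_range.1 hm), mul_zero]
  simp only [Finset.sum_apply, Pi.smul_apply, smul_eq_mul]
  rw [show n + 1 = k + (n - k + 1) by omega, sum_range_add, hlow, zero_add, dCoeff, mul_sum]
  refine sum_congr rfl fun j hj ↦ ?_
  have hkj : k + j ≤ n := by have := mem_range.1 hj; omega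
  have hpow : (2 : ℝ) ^ (2 * k) = 4 ^ k := by rw [pow_mul]; norm_num
  rw [jacobiTaylorCoeff_add hα β hkj, laurentCoeff_add_self, hpow]
  rcases neg_one_pow_eq_or ℝ j with hsign | hsign <;> rw [hsign] <;> field_simp

lemma jacobiOp_dCoeff {α : ℝ} (hα : ∀ i : ℕ, α + 1 ≠ -i) (β : ℝ) {n k : ℕ} (hk : k + 2 ≤ n) :
    jacobiOp α β n k (dCoeff α β n) = 0 := by
  rw [← jacobiOp_sum_jacobiTaylorCoeff_smul α β n k, jacobiOp_apply, jacobiOp_apply,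
    dCoeff_eq_sum hα β (by omega : k ≤ n), dCoeff_eq_sum hα β (by omega : k + 1 ≤ n),
    dCoeff_eq_sum hα β hk]

lemma dCoeff_self (α β : ℝ) (n : ℕ) :
    dCoeff α β n n = poch (n + α + β + 1) n / (2 ^ (2 * n) * n.factorial) := by
  simp [dCoeff]

lemma dCoeff_succ_self {α : ℝ} (β : ℝ) {p : ℕ} (hp : (p : ℝ) + α + 1 ≠ 0) :
    dCoeff α β (p + 1) p =
      (α - β) * poch ((p + 1 : ℕ) + α + β + 1) p / (2 ^ (2 * p + 1) * p.factorial) := by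
  rw [dCoeff, Nat.add_sub_cancel_left, sum_range_succ, sum_range_one]
  simp only [poch_zero, poch_one, Nat.factorial_zero, Nat.factorial_one, Nat.cast_one, mul_one,
    one_mul, div_one, pow_succ]
  push_cast
  field_simp
  ring

end ConnectionCoefficients

theorem dCoeff_recurrence_general {α β : ℝ} {n : ℕ} (hα : ∀ i : ℕ, α + 1 ≠ -i)
    (hαβ : ∀ i : ℕ, (n : ℝ) + α + β + 1 ≠ -i) (hn : n ≠ 0) :
    (∀ k : ℕ, k + 2 ≤ n →
      dCoeff α β n k =
        2 * (α - β) * ((k : ℝ) + 1) /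
            ((n : ℝ) * ((n : ℝ) + α + β + 1) - (k : ℝ) ^ 2 - (α + β + 1) * k) *
          dCoeff α β n (k + 1) +
        ((n : ℝ) * ((n : ℝ) + α + β + 1) - ((k : ℝ) + 2) ^ 2 + (α + β + 1) * ((k : ℝ) + 2)) /
            ((n : ℝ) * ((n : ℝ) + α + β + 1) - (k : ℝ) ^ 2 - (α + β + 1) * k) *
          dCoeff α β n (k + 2)) ∧
    dCoeff α β n n =
      Real.Gamma (2 * (n : ℝ) + α + β + 1) /
        (2 ^ (2 * n) * Real.Gamma ((n : ℝ) + α + β + 1) * (Nat.factorial n)) ∧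
    dCoeff α β n (n - 1) =
      (α - β) * Real.Gamma (2 * (n : ℝ) + α + β) /
        (2 ^ (2 * n - 1) * Real.Gamma ((n : ℝ) + α + β + 1) * (Nat.factorial (n - 1))) := by
  have hΓ : Real.Gamma ((n : ℝ) + α + β + 1) ≠ 0 := Real.Gamma_ne_zero hαβ
  refine ⟨fun k hk ↦ ?_, ?_, ?_⟩
  · have hlead : (n : ℝ) * (n + α + β + 1) - (k : ℝ) ^ 2 - (α + β + 1) * k ≠ 0 := by
      have hkn : (n : ℝ) - k ≠ 0 := sub_ne_zero.2 (by exact_mod_cast (by omega : n ≠ k))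
      have hsum : (n : ℝ) + k + α + β + 1 ≠ 0 := fun h ↦ hαβ k (by linarith)
      convert mul_ne_zero hkn hsum using 1
      ring
    have hrec := jacobiOp_dCoeff hα β hk
    rw [jacobiOp_apply] at hrec
    rw [div_mul_eq_mul_div, div_mul_eq_mul_div, ← add_div, eq_div_iff hlead]
    linear_combination hrec
  · rw [dCoeff_self, show 2 * (n : ℝ) + α + β + 1 = n + α + β + 1 + n by ring,
      Gamma_add_natCast_eq_poch_mul hαβ]
    field_simp
  · obtain ⟨p, rfl⟩ := Nat.exists_eq_succ_of_ne_zero hn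
    have hp : (p : ℝ) + α + 1 ≠ 0 := fun h ↦ hα p (by linarith)
    rw [Nat.succ_sub_one, show 2 * (p + 1) - 1 = 2 * p + 1 by omega, dCoeff_succ_self β hp,
      show 2 * ((p + 1 : ℕ) : ℝ) + α + β = (p + 1 : ℕ) + α + β + 1 + p by push_cast; ring,
      Gamma_add_natCast_eq_poch_mul hαβ]
    field_simp

/-- the three-term recurrence for the coefficients `d_{k,n}`, together with the
initial values `d_{n,n}` and `d_{n-1,n}`. -/
theorem dCoeff_recurrence
    (α β : ℝ) (hα : -1 < α) (hβ : -1 < β) (n : ℕ) (hn : 2 ≤ n) :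
    (∀ k : ℕ, k + 2 ≤ n →
      dCoeff α β n k =
        2 * (α - β) * ((k : ℝ) + 1) /
            ((n : ℝ) * ((n : ℝ) + α + β + 1) - (k : ℝ) ^ 2 - (α + β + 1) * k) *
          dCoeff α β n (k + 1) +
        ((n : ℝ) * ((n : ℝ) + α + β + 1) - ((k : ℝ) + 2) ^ 2 + (α + β + 1) * ((k : ℝ) + 2)) /
            ((n : ℝ) * ((n : ℝ) + α + β + 1) - (k : ℝ) ^ 2 - (α + β + 1) * k) *
          dCoeff α β n (k + 2)) ∧
    dCoeff α β n n =
      Real.Gamma (2 * (n : ℝ) + α + β + 1) /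
        (2 ^ (2 * n) * Real.Gamma ((n : ℝ) + α + β + 1) * (Nat.factorial n)) ∧
    dCoeff α β n (n - 1) =
      (α - β) * Real.Gamma (2 * (n : ℝ) + α + β) /
        (2 ^ (2 * n - 1) * Real.Gamma ((n : ℝ) + α + β + 1) * (Nat.factorial (n - 1))) := by
  have hn' : (2 : ℝ) ≤ n := by exact_mod_cast hn
  exact dCoeff_recurrence_general (ne_neg_natCast_of_pos (by linarith))
    (ne_neg_natCast_of_pos (by linarith)) (by omega)
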